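/- arXiv:math/0304410 — 2 statements merged into one kernel-verified Lean document; each statement's English description precedes it below -/
import Mathlib

section
/- There exists a 77×77 matrix with all entries equal to 1 or -1 whose determinant equals 2^76 · 19^37 · 177. Consequently md(77) ≥ 2^76 · 19^37 · 177. -/
/-- `md n` is the maximal determinant of an `n × n` matrix all of whose
entries are `1` or `-1`. -/
noncomputable def md (n : ℕ) : ℤ :=
  sSup {d : ℤ | ∃ M : Matrix (Fin n) (Fin n) ℤ,
    (∀ i j, M i j = 1 ∨ M i j = -1) ∧ M.det = d}

/-!
Bordering a Hadamard matrix `H` of order `n` by a `±1` row `x` and a `±1` column `-y`, with corner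
entry `1`, gives a `±1` matrix of order `n + 1` whose determinant is
`det H * (1 + (x ⬝ᵥ Hᵀ *ᵥ y) / n)`, by the Schur complement. Williamson's array, filled with four
symmetric circulant matrices of order `19` whose periodic autocorrelations cancel, yields a Hadamard
matrix of order `76`, for which a suitable choice of `x` and `y` makes the bilinear form equal to
`632`. The resulting determinant is `76 ^ 38 * (1 + 632 / 76) = 2 ^ 76 * 19 ^ 37 * 177` up to sign,
and negating one row corrects the sign.
-/

open Matrix

section SignMatrices

theorem abs_det_le_factorial {n : Type*} [Fintype n] [DecidableEq n] {M : Matrix n n ℤ}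
    (hM : ∀ i j, M i j ∈ unitary ℤ) : |M.det| ≤ (Fintype.card n).factorial := by
  have hentry (i j : n) : |M i j| ≤ 1 := by
    rcases Unitary.mem_iff_eq_one_or_eq_neg_one.mp (hM i j) with h | h <;> simp [h]
  simpa using det_le (abv := AbsoluteValue.abs) hentry

theorem det_le_md {n : ℕ} {M : Matrix (Fin n) (Fin n) ℤ} (hM : ∀ i j, M i j = 1 ∨ M i j = -1) :
    M.det ≤ md n := by
  refine le_csSup ⟨((Fintype.card (Fin n)).factorial : ℤ), ?_⟩ ⟨M, hM, rfl⟩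
  rintro _ ⟨N, hN, rfl⟩
  exact (le_abs_self _).trans
    (abs_det_le_factorial fun i j => Unitary.mem_iff_eq_one_or_eq_neg_one.mpr (hN i j))

theorem exists_unitary_entries_det_eq_abs {n : Type*} [Fintype n] [DecidableEq n] [Nonempty n]
    {M : Matrix n n ℤ} (hM : ∀ i j, M i j ∈ unitary ℤ) :
    ∃ N : Matrix n n ℤ, (∀ i j, N i j ∈ unitary ℤ) ∧ N.det = |M.det| := by
  rcases abs_choice M.det with h | h
  · exact ⟨M, hM, h.symm⟩
  · obtain ⟨i₀⟩ := ‹Nonempty n›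
    refine ⟨M.updateRow i₀ ((-1 : ℤ) • M i₀), fun i j => ?_, ?_⟩
    · rcases eq_or_ne i i₀ with rfl | hi
      · simpa [Unitary.mem_iff] using hM i j
      · simpa [updateRow_ne hi] using hM i j
    · rw [det_updateRow_smul, updateRow_eq_self, h, neg_one_mul]

theorem exists_fin_det_eq_abs {n : Type*} [Fintype n] [DecidableEq n] {k : ℕ} [NeZero k]
    (hn : Fintype.card n = k) {M : Matrix n n ℤ} (hM : ∀ i j, M i j ∈ unitary ℤ) :
    ∃ N : Matrix (Fin k) (Fin k) ℤ, (∀ i j, N i j = 1 ∨ N i j = -1) ∧ N.det = |M.det| := by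
  let e := Fintype.equivFinOfCardEq hn
  obtain ⟨N, hN, hdet⟩ := exists_unitary_entries_det_eq_abs
    (M := reindex e e M) fun i j => hM (e.symm i) (e.symm j)
  exact ⟨N, fun i j => Unitary.mem_iff_eq_one_or_eq_neg_one.mp (hN i j),
    by rw [hdet, det_reindex_self]⟩

end SignMatrices

section Bordering

variable {n R : Type*}

/-- The matrix `H` bordered by the column `-y` on the right, the row `x` below and the corner
entry `1`. The sign of `y` makes the Schur complement of `H` a sum rather than a difference. -/
def bordered [Ring R] (H : Matrix n n R) (x y : n → R) : Matrix (n ⊕ Unit) (n ⊕ Unit) R :=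
  fromBlocks H (-replicateCol Unit y) (replicateRow Unit x) 1

theorem bordered_mem_unitary [Ring R] [StarRing R] {H : Matrix n n R} {x y : n → R}
    (hH : ∀ i j, H i j ∈ unitary R) (hx : ∀ i, x i ∈ unitary R) (hy : ∀ i, y i ∈ unitary R) :
    ∀ i j, bordered H x y i j ∈ unitary R := by
  rintro (i | i) (j | j)
  · exact hH i j
  · simpa [bordered, Unitary.mem_iff] using hy i
  · exact hx j
  · simp [bordered]

variable [Fintype n] [DecidableEq n]

theorem mul_det_bordered [CommRing R] {H K : Matrix n n R} {c : R} (hHK : H * K = c • 1)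
    (x y : n → R) :
    c * (bordered H x y).det = H.det * (c + x ⬝ᵥ K *ᵥ y) := by
  have hclear : bordered H x y * fromBlocks 1 (replicateCol Unit (K *ᵥ y)) 0 (c • 1) =
      fromBlocks H 0 (replicateRow Unit x)
        (replicateRow Unit x * replicateCol Unit (K *ᵥ y) + c • 1) := by
    simp [bordered, fromBlocks_multiply, replicateCol_mulVec, ← Matrix.mul_assoc, hHK]
  have hdet := congrArg det hclear
  rw [det_mul, det_fromBlocks_zero₂₁, det_fromBlocks_zero₁₂] at hdet
  simpa [mul_comm, add_comm] using hdet

theorem abs_det_of_isHadamard {H : Matrix n n ℤ} (hH : H.IsHadamard) {k : ℕ}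
    (hn : Fintype.card n = 2 * k) : |H.det| = (Fintype.card n : ℤ) ^ k := by
  refine (pow_left_inj₀ (abs_nonneg _) (by positivity) two_ne_zero).mp ?_
  rw [sq_abs, ← pow_mul, mul_comm k, ← hn, ← hH.det_mul_star_det, star_trivial, sq]

theorem card_mul_abs_det_bordered {H : Matrix n n ℤ} (hH : H.IsHadamard) {k : ℕ}
    (hn : Fintype.card n = 2 * k) (x y : n → ℤ) :
    Fintype.card n * |(bordered H x y).det| =
      (Fintype.card n : ℤ) ^ k * |Fintype.card n + x ⬝ᵥ Hᴴ *ᵥ y| := by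
  rw [← abs_det_of_isHadamard hH hn, ← abs_mul, ← mul_det_bordered hH.mul_conjTranspose, abs_mul,
    Nat.abs_cast]

end Bordering

section Williamson

variable {n R : Type*} [Ring R]

/-- Williamson's array of four blocks: right multiplication by the quaternion
`A - B i - C j - D k`, written in the basis `1, i, j, k`. -/
def williamson (A B C D : Matrix n n R) :
    Matrix ((n ⊕ n) ⊕ (n ⊕ n)) ((n ⊕ n) ⊕ (n ⊕ n)) R :=
  fromBlocks (fromBlocks A B (-B) A) (fromBlocks C D (-D) C)
    (fromBlocks (-C) D (-D) (-C)) (fromBlocks A (-B) B A)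

-- The norm of a quaternion, as its product with the conjugate quaternion.
theorem williamson_mul_williamson_neg [Fintype n] [DecidableEq n] {A B C D : Matrix n n R} {c : R}
    (hAB : Commute A B) (hAC : Commute A C) (hAD : Commute A D)
    (hBC : Commute B C) (hBD : Commute B D) (hCD : Commute C D)
    (hsum : A * A + B * B + C * C + D * D = c • 1) :
    williamson A B C D * williamson A (-B) (-C) (-D) = c • 1 := by
  simp only [williamson, fromBlocks_multiply, fromBlocks_add, hAB.eq, hAC.eq, hAD.eq, hBC.eq,
    hBD.eq, hCD.eq, neg_neg, Matrix.neg_mul, Matrix.mul_neg]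
  have hscalar : fromBlocks (fromBlocks (c • 1) 0 0 (c • 1)) (fromBlocks 0 0 0 0)
      (fromBlocks 0 0 0 0) (fromBlocks (c • 1) 0 0 (c • 1)) =
        c • (1 : Matrix ((n ⊕ n) ⊕ (n ⊕ n)) ((n ⊕ n) ⊕ (n ⊕ n)) R) := by
    simp only [← fromBlocks_one, fromBlocks_smul, fromBlocks_zero, smul_zero]
  rw [← hscalar, ← hsum]
  congr 2 <;> abel

variable [StarRing R]

theorem williamson_mem_unitary {A B C D : Matrix n n R}
    (hA : ∀ i j, A i j ∈ unitary R) (hB : ∀ i j, B i j ∈ unitary R)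
    (hC : ∀ i j, C i j ∈ unitary R) (hD : ∀ i j, D i j ∈ unitary R) :
    ∀ i j, williamson A B C D i j ∈ unitary R := by
  simp_all [williamson, Unitary.mem_iff]

theorem conjTranspose_williamson {A B C D : Matrix n n R} (hA : A.IsHermitian)
    (hB : B.IsHermitian) (hC : C.IsHermitian) (hD : D.IsHermitian) :
    (williamson A B C D)ᴴ = williamson A (-B) (-C) (-D) := by
  simp only [williamson, fromBlocks_conjTranspose, conjTranspose_neg, hA.eq, hB.eq, hC.eq, hD.eq,
    neg_neg]

variable [Fintype n] [DecidableEq n]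

theorem isHadamard_williamson {A : Fin 4 → Matrix n n R} (hentry : ∀ k i j, A k i j ∈ unitary R)
    (hherm : ∀ k, (A k).IsHermitian) (hcomm : ∀ k l, Commute (A k) (A l))
    (hsum : ∑ k, A k * A k = (4 * Fintype.card n : R) • 1) :
    (williamson (A 0) (A 1) (A 2) (A 3)).IsHadamard := by
  have hcard : (Fintype.card ((n ⊕ n) ⊕ (n ⊕ n)) : R) = 4 * Fintype.card n := by
    simp only [Fintype.card_sum, Nat.cast_add]
    noncomm_ring
  have hconj := conjTranspose_williamson (hherm 0) (hherm 1) (hherm 2) (hherm 3)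
  rw [Fin.sum_univ_four] at hsum
  refine ⟨williamson_mem_unitary (hentry 0) (hentry 1) (hentry 2) (hentry 3), ?_, ?_⟩
  · rw [hconj, hcard]
    exact williamson_mul_williamson_neg (hcomm 0 1) (hcomm 0 2) (hcomm 0 3) (hcomm 1 2)
      (hcomm 1 3) (hcomm 2 3) hsum
  · rw [hconj, hcard]
    simpa only [neg_neg] using williamson_mul_williamson_neg
      (hcomm 0 1).neg_right (hcomm 0 2).neg_right (hcomm 0 3).neg_right
      (hcomm 1 2).neg_left.neg_right (hcomm 1 3).neg_left.neg_right (hcomm 2 3).neg_left.neg_right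
      (by simpa only [neg_mul_neg] using hsum)

theorem isHadamard_williamson_circulant {G S : Type*} [Fintype G] [DecidableEq G] [AddCommGroup G]
    [CommRing S] [StarRing S] {a : Fin 4 → G → S} (hentry : ∀ k g, a k g ∈ unitary S)
    (hsymm : ∀ k g, star (a k (-g)) = a k g)
    (hsum : ∑ k, circulant (a k) *ᵥ a k = Pi.single 0 (4 * Fintype.card G : S)) :
    (williamson (circulant (a 0)) (circulant (a 1)) (circulant (a 2))
      (circulant (a 3))).IsHadamard := by
  refine isHadamard_williamson (A := fun k => circulant (a k)) (fun k i j => hentry k (i - j))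
    (fun k => ?_) (fun k l => circulant_mul_comm (a k) (a l)) ?_
  · rw [IsHermitian, conjTranspose_circulant]
    exact congrArg circulant (funext (hsymm k))
  · calc ∑ k, circulant (a k) * circulant (a k)
        = circulant (∑ k, circulant (a k) *ᵥ a k) := by
          simp only [circulant_mul, Fin.sum_univ_four, circulant_add]
      _ = (4 * Fintype.card G : S) • 1 := by
          rw [hsum, circulant_single, scalar_apply, smul_one_eq_diagonal]

end Williamson

section Order76

/-- The `±1` vector with entry `-1` exactly at the indices in `s`. -/
def signVec {ι : Type*} [DecidableEq ι] (s : Finset ι) : ι → ℤ :=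
  fun i => if i ∈ s then -1 else 1

theorem signVec_mem_unitary {ι : Type*} [DecidableEq ι] (s : Finset ι) (i : ι) :
    signVec s i ∈ unitary ℤ := by
  rw [Unitary.mem_iff_eq_one_or_eq_neg_one, signVec]
  split_ifs <;> simp

/-- First columns of four symmetric circulant matrices of Williamson type of order `19`. Among the
Williamson quadruples of this order, found by exhaustive search, this is one whose array admits
border vectors of the required value that are short to describe. -/
def williamsonSeq : Fin 4 → ZMod 19 → ℤ :=
  ![signVec {1, 2, 4, 15, 17, 18},
    signVec {3, 5, 6, 7, 12, 13, 14, 16},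
    signVec {1, 5, 6, 8, 11, 13, 14, 18},
    signVec {1, 5, 6, 9, 10, 13, 14, 18}]

/-- The Hadamard matrix of order `76` built from `williamsonSeq`. -/
def hadamard76 : Matrix ((ZMod 19 ⊕ ZMod 19) ⊕ (ZMod 19 ⊕ ZMod 19))
    ((ZMod 19 ⊕ ZMod 19) ⊕ (ZMod 19 ⊕ ZMod 19)) ℤ :=
  williamson (circulant (williamsonSeq 0)) (circulant (williamsonSeq 1))
    (circulant (williamsonSeq 2)) (circulant (williamsonSeq 3))

/-- The row bordering `hadamard76`. Together with `borderCol` it comes from a tabu search over sign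
vectors invariant under negation in each copy of `ZMod 19`. -/
def borderRow : (ZMod 19 ⊕ ZMod 19) ⊕ (ZMod 19 ⊕ ZMod 19) → ℤ :=
  Sum.elim (Sum.elim (-signVec {8, 11}) (signVec {8, 11}))
    (Sum.elim (signVec {9, 10}) (signVec {9, 10}))

/-- The negative of the column bordering `hadamard76`. Its entries are the signs of
`hadamard76 *ᵥ borderRow`, the choice that maximises the determinant for the given row. -/
def borderCol : (ZMod 19 ⊕ ZMod 19) ⊕ (ZMod 19 ⊕ ZMod 19) → ℤ :=
  Sum.elim (Sum.elim (signVec {6, 7, 9, 10, 12, 13}) (signVec {0}))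
    (Sum.elim (signVec {4, 15}) (signVec {0}))

theorem isHadamard_hadamard76 : hadamard76.IsHadamard := by
  refine isHadamard_williamson_circulant (fun k g => ?_) (by decide +kernel) (by decide +kernel)
  fin_cases k <;> exact signVec_mem_unitary _ g

theorem borderRow_mem_unitary : ∀ i, borderRow i ∈ unitary ℤ := by
  rintro ((i | i) | (i | i))
  · simpa [borderRow, Unitary.mem_iff] using signVec_mem_unitary {8, 11} i
  all_goals exact signVec_mem_unitary _ i

theorem borderCol_mem_unitary : ∀ i, borderCol i ∈ unitary ℤ := by
  rintro ((i | i) | (i | i)) <;> exact signVec_mem_unitary _ i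

theorem borderRow_dotProduct_hadamard76_mulVec_borderCol :
    borderRow ⬝ᵥ hadamard76ᴴ *ᵥ borderCol = 632 := by
  decide +kernel

theorem abs_det_bordered_hadamard76 :
    |(bordered hadamard76 borderRow borderCol).det| = 2 ^ 76 * 19 ^ 37 * 177 := by
  have h := card_mul_abs_det_bordered isHadamard_hadamard76 (k := 38) (by simp [ZMod.card])
    borderRow borderCol
  rw [borderRow_dotProduct_hadamard76_mulVec_borderCol] at h
  norm_num [ZMod.card] at h ⊢
  linarith

end Order76

theorem stmt_15 :
    (∃ M : Matrix (Fin 77) (Fin 77) ℤ,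
      (∀ i j, M i j = 1 ∨ M i j = -1) ∧ M.det = 2^76 * 19^37 * 177) ∧
    (2^76 * 19^37 * 177 : ℤ) ≤ md 77 := by
  obtain ⟨M, hM, hdet⟩ := exists_fin_det_eq_abs (k := 77) (by simp [ZMod.card])
    (bordered_mem_unitary isHadamard_hadamard76.apply_mem borderRow_mem_unitary
      borderCol_mem_unitary)
  rw [abs_det_bordered_hadamard76] at hdet
  exact ⟨⟨M, hM, hdet⟩, hdet ▸ det_le_md hM⟩
end

section
/- There exists a 95×95 matrix with all entries equal to 1 or -1 whose determinant equals 2^96 · 23^36 · 27^11. Consequently md(95) ≥ 2^96 · 23^36 · 27^11. -/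
/-!
Let `Q` be a skew-symmetric matrix of odd order `n`, zero on the diagonal and `±1` off it, with
`Q Qᵀ = n I - J` and `Q J = 0`; for `n = q` a prime power congruent to `3` modulo `4`, the quadratic
character of `𝔽_q` provides one. With `S = J₄ - 2 I₄` and `B` the `4 × 3` matrix obtained by
deleting a constant column from a Hadamard matrix, the sign matrix
`A = [J₄ ⊗ I + S ⊗ Q, B ⊗ 𝟏; Bᵀ ⊗ 𝟏ᵀ, J₃]` of order `4 n + 3` has a Gram matrix `A Aᵀ` that differs
from `4 n I` by a matrix of rank at most `n + 2`. The Weinstein–Aronszajn identity therefore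
expresses `(det A) ^ 2` by a determinant of order `n + 2`, which is block diagonal:
one block is `(4 n + 16) I - 4 J` and the other is `2 × 2`.
-/

open Matrix
open scoped Kronecker

namespace MaxDet

section Determinant

variable {m n R : Type*} [Fintype m] [Fintype n] [DecidableEq m] [DecidableEq n] [CommRing R]

theorem pow_card_mul_det_smul_one_add_mul_comm (c : R) (X : Matrix m n R) (Y : Matrix n m R) :
    c ^ Fintype.card n * (c • (1 : Matrix m m R) + X * Y).det =
      c ^ Fintype.card m * (c • (1 : Matrix n n R) + Y * X).det := by
  have h := congrArg (Polynomial.eval c) (charpoly_mul_comm' (-X) Y)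
  simpa [eval_charpoly, ← smul_one_eq_diagonal, scalar_apply] using h

theorem mul_det_smul_one_add_vecMulVec (c : R) (u v : n → R) :
    c * (c • (1 : Matrix n n R) + vecMulVec u v).det = c ^ Fintype.card n * (c + v ⬝ᵥ u) := by
  simpa [vecMulVec_eq Unit, mul_apply, dotProduct] using
    pow_card_mul_det_smul_one_add_mul_comm c (replicateCol Unit u) (replicateRow Unit v)

theorem det_smul_one_add_vecMulVec [IsDomain R] [Nonempty n] {c : R} (hc : c ≠ 0) (u v : n → R) :
    (c • (1 : Matrix n n R) + vecMulVec u v).det =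
      c ^ (Fintype.card n - 1) * (c + v ⬝ᵥ u) := by
  apply mul_left_cancel₀ hc
  rw [mul_det_smul_one_add_vecMulVec, ← mul_assoc, mul_pow_sub_one Fintype.card_ne_zero]

end Determinant

section SignMatrix

variable {m n : Type*}

/-- A `±1` matrix. -/
def IsSignMatrix (M : Matrix m n ℤ) : Prop :=
  ∀ i j, M i j = 1 ∨ M i j = -1

theorem IsSignMatrix.neg {M : Matrix m n ℤ} (hM : IsSignMatrix M) : IsSignMatrix (-M) :=
  fun i j => (hM i j).symm.imp (by simp [·]) (by simp [·])

theorem IsSignMatrix.exists_fin_det_eq [Fintype n] [DecidableEq n] {M : Matrix n n ℤ}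
    (hM : IsSignMatrix M) {N : ℕ} (hN : Fintype.card n = N) (hodd : Odd N) {d : ℤ}
    (hd : M.det ^ 2 = d ^ 2) :
    ∃ M' : Matrix (Fin N) (Fin N) ℤ, IsSignMatrix M' ∧ M'.det = d := by
  let e : n ≃ Fin N := Fintype.equivFinOfCardEq hN
  rcases sq_eq_sq_iff_eq_or_eq_neg.mp hd with h | h
  · exact ⟨reindex e e M, fun i j => hM _ _, by rw [det_reindex_self, h]⟩
  · exact ⟨reindex e e (-M), fun i j => hM.neg _ _, by
      rw [det_reindex_self, det_neg, hN, hodd.neg_one_pow, h, neg_one_mul, neg_neg]⟩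

theorem finite_setOf_isSignMatrix [Finite m] [Finite n] :
    {M : Matrix m n ℤ | IsSignMatrix M}.Finite := by
  have h : (Set.univ.pi fun _ : m => Set.univ.pi fun _ : n => ({1, -1} : Set ℤ)).Finite :=
    Set.Finite.pi fun _ => Set.Finite.pi fun _ => Set.toFinite _
  exact h.subset fun M hM i _ j _ => hM i j

theorem IsSignMatrix.det_le_md {N : ℕ} {M : Matrix (Fin N) (Fin N) ℤ} (hM : IsSignMatrix M) :
    M.det ≤ md N :=
  le_csSup (finite_setOf_isSignMatrix.image det).bddAbove ⟨M, hM, rfl⟩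

end SignMatrix

section AllOnes

/-- The all-ones matrix `J`; its columns and rows of length one serve as the vectors `𝟏`, `𝟏ᵀ`. -/
def allOnes (m n : Type*) : Matrix m n ℤ :=
  of fun _ _ => 1

variable {l m n : Type*}

@[simp]
theorem allOnes_apply (i : m) (j : n) : allOnes m n i j = 1 :=
  rfl

@[simp]
theorem transpose_allOnes : (allOnes m n)ᵀ = allOnes n m :=
  rfl

theorem allOnes_mul_allOnes [Fintype m] :
    allOnes l m * allOnes m n = (Fintype.card m : ℤ) • allOnes l n := by
  ext
  simp [mul_apply]

end AllOnes

/-- The core of a skew Hadamard matrix: what is left of a normalised skew Hadamard matrix `H` after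
deleting the border and subtracting the identity. -/
structure IsSkewCore {ι : Type*} [Fintype ι] [DecidableEq ι] (Q : Matrix ι ι ℤ) : Prop where
  eq_one_or_neg_one : ∀ i j, i ≠ j → Q i j = 1 ∨ Q i j = -1
  transpose_eq_neg : Qᵀ = -Q
  mul_transpose : Q * Qᵀ = (Fintype.card ι : ℤ) • 1 - allOnes ι ι
  mul_allOnes : Q * allOnes ι Unit = 0

section Construction

/-- Deleting the constant column from a Hadamard matrix of order four leaves this matrix. -/
def border : Matrix (Fin 4) (Fin 3) ℤ :=
  !![-1, -1, 1; -1, 1, -1; 1, -1, -1; 1, 1, 1]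

/-- The symmetric Hadamard matrix `J₄ - 2 I₄`. -/
def signBlock : Matrix (Fin 4) (Fin 4) ℤ :=
  allOnes (Fin 4) (Fin 4) - 2

theorem signBlock_mul_transpose : signBlock * signBlockᵀ = (4 : ℤ) • 1 := by
  decide

theorem allOnes_mul_signBlock_transpose :
    allOnes (Fin 4) (Fin 4) * signBlockᵀ = signBlock * allOnes (Fin 4) (Fin 4) := by
  decide

theorem isSignMatrix_signBlock : IsSignMatrix signBlock := fun i j => by
  fin_cases i <;> fin_cases j <;> decide

theorem isSignMatrix_border : IsSignMatrix border := fun i j => by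
  fin_cases i <;> fin_cases j <;> decide

theorem border_mul_transpose : border * borderᵀ = (4 : ℤ) • 1 - allOnes (Fin 4) (Fin 4) := by
  decide

theorem transpose_border_mul : borderᵀ * border = (4 : ℤ) • 1 := by
  decide

theorem allOnes_mul_border {l : Type*} : allOnes l (Fin 4) * border = 0 := by
  ext _ j
  fin_cases j <;> rfl

variable {ι : Type*} [Fintype ι] [DecidableEq ι]

/-- The leading block `J₄ ⊗ I + S ⊗ Q` of `borderedMatrix`. -/
def coreBlock (Q : Matrix ι ι ℤ) : Matrix (Fin 4 × ι) (Fin 4 × ι) ℤ :=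
  allOnes (Fin 4) (Fin 4) ⊗ₖ 1 + signBlock ⊗ₖ Q

/-- The `±1` matrix of order `4 n + 3` built from a skew core of order `n`. The index type
`Fin 3 × Unit` stands for `Fin 3`, so that all four blocks are Kronecker products. -/
def borderedMatrix (Q : Matrix ι ι ℤ) :
    Matrix (Fin 4 × ι ⊕ Fin 3 × Unit) (Fin 4 × ι ⊕ Fin 3 × Unit) ℤ :=
  fromBlocks (coreBlock Q) (border ⊗ₖ allOnes ι Unit)
    (borderᵀ ⊗ₖ allOnes Unit ι) (allOnes (Fin 3) (Fin 3) ⊗ₖ 1)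

/-- The left factor of the low-rank part of the Gram matrix of `borderedMatrix`. With `u = B 𝟏`,
that part is `[J₄ ⊗ (4 I - J), u 𝟏ᵀ ⊗ 𝟏; 𝟏 uᵀ ⊗ 𝟏ᵀ, 3 J₃]`, so its column space is spanned by the
columns of `(𝟏 ⊗ I, 0)` together with the vectors `(u ⊗ 𝟏, 0)` and `(0, 𝟏)`. -/
def gramLeft (ι : Type*) [DecidableEq ι] :
    Matrix (Fin 4 × ι ⊕ Fin 3 × Unit) (Unit × ι ⊕ Fin 2 × Unit) ℤ :=
  fromBlocks (allOnes (Fin 4) Unit ⊗ₖ 1) (!![-1, 0; -1, 0; -1, 0; 3, 0] ⊗ₖ allOnes ι Unit)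
    0 (!![0, 1; 0, 1; 0, 1] ⊗ₖ 1)

/-- The right factor of the low-rank part of the Gram matrix of `borderedMatrix`, with rows ordered
as the columns of `gramLeft`. -/
def gramRight (ι : Type*) [DecidableEq ι] :
    Matrix (Unit × ι ⊕ Fin 2 × Unit) (Fin 4 × ι ⊕ Fin 3 × Unit) ℤ :=
  fromBlocks (allOnes Unit (Fin 4) ⊗ₖ ((4 : ℤ) • 1 - allOnes ι ι)) 0
    (!![0, 0, 0, 0; -1, -1, -1, 3] ⊗ₖ allOnes Unit ι) (!![1, 1, 1; 3, 3, 3] ⊗ₖ 1)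

namespace IsSkewCore

variable {Q : Matrix ι ι ℤ}

theorem apply_self (hQ : IsSkewCore Q) (i : ι) : Q i i = 0 := by
  have h : Q i i = -Q i i := congrFun₂ hQ.transpose_eq_neg i i
  linarith

theorem isSignMatrix_borderedMatrix (hQ : IsSkewCore Q) : IsSignMatrix (borderedMatrix Q) := by
  rintro (⟨a, k⟩ | ⟨s, _⟩) (⟨b, l⟩ | ⟨t, _⟩)
  · rcases eq_or_ne k l with rfl | hkl
    · simp [borderedMatrix, coreBlock, hQ.apply_self]
    · rcases isSignMatrix_signBlock a b with h | h <;>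
        rcases hQ.eq_one_or_neg_one k l hkl with h' | h' <;>
        simp [borderedMatrix, coreBlock, hkl, h, h']
  · simpa [borderedMatrix] using isSignMatrix_border a t
  · simpa [borderedMatrix] using isSignMatrix_border b s
  · simp [borderedMatrix]

theorem gram_coreBlock (hQ : IsSkewCore Q) :
    coreBlock Q * (coreBlock Q)ᵀ =
      (4 * Fintype.card ι : ℤ) • 1 + allOnes (Fin 4) (Fin 4) ⊗ₖ ((4 : ℤ) • 1) -
        ((4 : ℤ) • 1) ⊗ₖ allOnes ι ι := by
  simp only [coreBlock, ← kroneckerMap_transpose, transpose_add, transpose_allOnes, transpose_one,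
    add_mul, mul_add, ← mul_kronecker_mul, one_mul, mul_one, hQ.mul_transpose,
    signBlock_mul_transpose, allOnes_mul_signBlock_transpose, allOnes_mul_allOnes,
    Fintype.card_fin]
  rw [hQ.transpose_eq_neg, ← one_kronecker_one]
  ext ⟨a, k⟩ ⟨b, l⟩
  simp only [Matrix.add_apply, Matrix.sub_apply, Matrix.neg_apply, Matrix.smul_apply,
    kroneckerMap_apply, allOnes_apply, smul_eq_mul]
  push_cast
  ring

theorem coreBlock_mul_border (hQ : IsSkewCore Q) :
    coreBlock Q * (border ⊗ₖ allOnes ι Unit) = 0 := by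
  simp only [coreBlock, Matrix.add_mul, ← mul_kronecker_mul, Matrix.one_mul, allOnes_mul_border,
    hQ.mul_allOnes, zero_kronecker, kronecker_zero, add_zero]

theorem gram_borderedMatrix (hQ : IsSkewCore Q) :
    borderedMatrix Q * (borderedMatrix Q)ᵀ =
      (4 * Fintype.card ι : ℤ) • (1 : Matrix _ _ ℤ) + gramLeft ι * gramRight ι := by
  have h₁₂ := hQ.coreBlock_mul_border
  have h₂₁ := congrArg transpose h₁₂
  rw [transpose_mul, transpose_zero, ← kroneckerMap_transpose, transpose_allOnes] at h₂₁
  simp only [borderedMatrix, gramLeft, gramRight, fromBlocks_transpose, fromBlocks_multiply,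
    ← fromBlocks_one, fromBlocks_smul, fromBlocks_add, hQ.gram_coreBlock]
  simp only [← kroneckerMap_transpose, transpose_transpose, transpose_allOnes, transpose_one, h₁₂,
    h₂₁, ← mul_kronecker_mul, allOnes_mul_allOnes, border_mul_transpose, transpose_border_mul,
    Matrix.mul_one, Matrix.one_mul, Matrix.mul_zero, Matrix.zero_mul, zero_add, smul_zero]
  congr 1
  · rw [show !![-1, 0; -1, 0; -1, 0; 3, 0] * !![0, 0, 0, 0; -1, -1, -1, (3 : ℤ)] = 0 by decide]
    ext ⟨a, k⟩ ⟨b, l⟩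
    simp only [Matrix.add_apply, Matrix.sub_apply, Matrix.smul_apply, Matrix.zero_apply,
      kroneckerMap_apply, allOnes_apply, smul_eq_mul, Fintype.card_unit]
    push_cast
    ring
  · congr 1
    decide
  · congr 1
    decide
  · rw [show !![0, 1; 0, 1; 0, (1 : ℤ)] * !![1, 1, 1; 3, 3, (3 : ℤ)] =
        (3 : ℤ) • allOnes (Fin 3) (Fin 3) by decide, ← one_kronecker_one]
    ext ⟨s, _⟩ ⟨t, _⟩
    simp only [Matrix.add_apply, Matrix.smul_apply, kroneckerMap_apply, allOnes_apply, smul_eq_mul,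
      Fintype.card_fin, one_apply_eq]
    push_cast
    ring

end IsSkewCore

theorem smul_one_add_gramRight_mul_gramLeft (ι : Type*) [Fintype ι] [DecidableEq ι] :
    (4 * Fintype.card ι : ℤ) • (1 : Matrix _ _ ℤ) + gramRight ι * gramLeft ι =
      fromBlocks (1 ⊗ₖ ((4 * Fintype.card ι + 16 : ℤ) • (1 : Matrix ι ι ℤ) + vecMulVec (-4) 1)) 0 0
        (!![(4 * Fintype.card ι : ℤ), 3; 12 * Fintype.card ι, 4 * Fintype.card ι + 9] ⊗ₖ 1) := by
  simp only [gramLeft, gramRight, fromBlocks_multiply, ← fromBlocks_one, fromBlocks_smul,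
    fromBlocks_add, ← mul_kronecker_mul, allOnes_mul_allOnes, Matrix.mul_one, Matrix.mul_zero,
    Matrix.zero_mul, zero_add, add_zero, smul_zero]
  congr 1
  · rw [← one_kronecker_one]
    ext ⟨_, k⟩ ⟨_, l⟩
    simp only [Matrix.add_apply, Matrix.sub_apply, Matrix.smul_apply, kroneckerMap_apply,
      allOnes_apply, smul_eq_mul, Fintype.card_fin, one_apply_eq, vecMulVec_apply,
      Pi.neg_apply, Pi.ofNat_apply]
    push_cast
    ring
  · rw [show allOnes Unit (Fin 4) * !![-1, 0; -1, 0; -1, 0; 3, (0 : ℤ)] = 0 by decide,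
      zero_kronecker]
  · rw [show !![0, 0, 0, 0; -1, -1, -1, (3 : ℤ)] * allOnes (Fin 4) Unit = 0 by decide,
      zero_kronecker]
  · rw [show !![0, 0, 0, 0; -1, -1, -1, 3] * !![-1, 0; -1, 0; -1, 0; 3, (0 : ℤ)] =
        !![0, 0; 12, (0 : ℤ)] by decide,
      show !![1, 1, 1; 3, 3, (3 : ℤ)] * !![0, 1; 0, 1; 0, (1 : ℤ)] = !![0, 3; 0, (9 : ℤ)] by decide,
      ← one_kronecker_one]
    ext ⟨s, _⟩ ⟨t, _⟩
    simp only [Matrix.add_apply, Matrix.smul_apply, kroneckerMap_apply, allOnes_apply]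
    fin_cases s <;> fin_cases t <;> simp [add_comm]

theorem IsSkewCore.det_borderedMatrix_sq [Nonempty ι] {Q : Matrix ι ι ℤ} (hQ : IsSkewCore Q) :
    (borderedMatrix Q).det ^ 2 =
      2 ^ (8 * Fintype.card ι + 8) * (Fintype.card ι : ℤ) ^ (3 * Fintype.card ι + 3) *
        (Fintype.card ι + 4) ^ (Fintype.card ι - 1) := by
  have hpos : (0 : ℤ) < 4 * Fintype.card ι := mod_cast Nat.mul_pos four_pos Fintype.card_pos
  have hgram := pow_card_mul_det_smul_one_add_mul_comm
    (4 * Fintype.card ι : ℤ) (gramLeft ι) (gramRight ι)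
  have hcore : ((4 * Fintype.card ι + 16 : ℤ) • (1 : Matrix ι ι ℤ) + vecMulVec (-4) 1).det =
      ((4 * Fintype.card ι + 16) ^ (Fintype.card ι - 1) * 16 : ℤ) := by
    rw [det_smul_one_add_vecMulVec (by positivity)]
    simp [dotProduct, mul_comm]
  rw [← hQ.gram_borderedMatrix, det_mul, det_transpose, smul_one_add_gramRight_mul_gramLeft,
    det_fromBlocks_zero₂₁, det_kronecker, det_kronecker, hcore, det_fin_two_of] at hgram
  simp only [Fintype.card_sum, Fintype.card_prod, Fintype.card_fin, Fintype.card_unit, det_one,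
    one_pow, one_mul, mul_one, pow_one] at hgram
  apply mul_left_cancel₀ (pow_ne_zero (Fintype.card ι + 2) hpos.ne')
  rw [sq, hgram]
  obtain ⟨m, hm⟩ := Nat.exists_eq_add_one.mpr (Fintype.card_pos (α := ι))
  rw [show (4 * Fintype.card ι + 16 : ℤ) = 2 ^ 2 * (Fintype.card ι + 4) by ring,
    show (4 * Fintype.card ι : ℤ) = 2 ^ 2 * Fintype.card ι by ring, hm, Nat.add_sub_cancel]
  simp only [mul_pow, ← pow_mul]
  ring

theorem IsSkewCore.exists_isSignMatrix_det_eq {Q : Matrix ι ι ℤ} (hQ : IsSkewCore Q) {n : ℕ}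
    (hn : Fintype.card ι = n) (hodd : Odd n) :
    ∃ M : Matrix (Fin (4 * n + 3)) (Fin (4 * n + 3)) ℤ, IsSignMatrix M ∧
      M.det = 2 ^ (4 * n + 4) * n ^ ((3 * n + 3) / 2) * (n + 4) ^ ((n - 1) / 2) := by
  have : Nonempty ι := Fintype.card_pos_iff.mp (hn ▸ hodd.pos)
  refine hQ.isSignMatrix_borderedMatrix.exists_fin_det_eq (by simp [hn]) ⟨2 * n + 1, by ring⟩ ?_
  obtain ⟨k, hk⟩ := hodd
  rw [hQ.det_borderedMatrix_sq, hn, show (3 * n + 3) / 2 = 3 * k + 3 by omega,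
    show (n - 1) / 2 = k by omega, show n - 1 = 2 * k by omega,
    show 3 * n + 3 = 2 * (3 * k + 3) by omega]
  ring

end Construction

section Paley

variable {F : Type*} [Field F] [Fintype F]

theorem ringChar_ne_two_of_card_mod_four (hF : Fintype.card F % 4 = 3) :
    ringChar F ≠ 2 := fun h => by
  have := FiniteField.even_card_iff_char_two.mp h
  omega

variable [DecidableEq F]

/-- The Jacobsthal matrix of a finite field. -/
def paleyCore (F : Type*) [Field F] [Fintype F] [DecidableEq F] : Matrix F F ℤ :=
  of fun i j => quadraticChar F (i - j)

theorem sum_quadraticChar_mul_quadraticChar_sub (hF : ringChar F ≠ 2) {d : F} (hd : d ≠ 0) :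
    ∑ x, quadraticChar F x * quadraticChar F (x - d) = -1 := by
  have hneg_one : quadraticChar F (-1) ^ 2 = 1 :=
    quadraticChar_sq_one (neg_ne_zero.mpr one_ne_zero)
  have hd_sq : quadraticChar F d ^ 2 = 1 := quadraticChar_sq_one hd
  have hJ : ∑ y, quadraticChar F y * quadraticChar F (1 - y) = -quadraticChar F (-1) := by
    simpa only [jacobiSum, (quadraticChar_isQuadratic F).inv] using
      jacobiSum_nontrivial_inv (quadraticChar_ne_one hF)
  calc ∑ x, quadraticChar F x * quadraticChar F (x - d)
      = ∑ y, quadraticChar F (d * y) * quadraticChar F (d * y - d) :=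
        (Equiv.sum_comp (Equiv.mulLeft₀ d hd)
          fun x => quadraticChar F x * quadraticChar F (x - d)).symm
    _ = ∑ y, quadraticChar F (-1) * (quadraticChar F y * quadraticChar F (1 - y)) := by
        refine Finset.sum_congr rfl fun y _ => ?_
        rw [show d * y - d = -1 * d * (1 - y) by ring]
        simp only [map_mul]
        linear_combination
          quadraticChar F (-1) * quadraticChar F y * quadraticChar F (1 - y) * hd_sq
    _ = -1 := by
        rw [← Finset.mul_sum, hJ]
        linear_combination -hneg_one

theorem quadraticChar_neg_one_of_card_mod_four (hF : Fintype.card F % 4 = 3) :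
    quadraticChar F (-1) = -1 :=
  quadraticChar_neg_one_iff_not_isSquare.mpr (by simp [FiniteField.isSquare_neg_one_iff, hF])

theorem sum_quadraticChar_mul_self :
    ∑ x, quadraticChar F x * quadraticChar F x = Fintype.card F - 1 := by
  have hterm (x : F) :
      quadraticChar F x * quadraticChar F x = 1 - if x = 0 then 1 else 0 := by
    split_ifs with hx
    · simp [hx]
    · rw [← sq, quadraticChar_sq_one hx, sub_zero]
  simp only [hterm, Finset.sum_sub_distrib, Finset.sum_ite_eq', Finset.mem_univ, if_true]
  simp

theorem isSkewCore_paleyCore (hF : Fintype.card F % 4 = 3) : IsSkewCore (paleyCore F) where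
  eq_one_or_neg_one i j hij := quadraticChar_dichotomy (sub_ne_zero.mpr hij)
  transpose_eq_neg := by
    ext i j
    rw [transpose_apply, neg_apply]
    simp only [paleyCore, of_apply]
    rw [← neg_sub i j, ← neg_one_mul, map_mul, quadraticChar_neg_one_of_card_mod_four hF,
      neg_one_mul]
  mul_transpose := by
    ext i j
    have hsum : (paleyCore F * (paleyCore F)ᵀ) i j =
        ∑ x, quadraticChar F x * quadraticChar F (x - (i - j)) := by
      rw [mul_apply, ← Equiv.sum_comp (Equiv.subLeft i)]
      exact Finset.sum_congr rfl fun x _ => by simp [paleyCore, sub_sub_eq_add_sub, add_comm]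
    rw [hsum, Matrix.sub_apply, Matrix.smul_apply, allOnes_apply]
    rcases eq_or_ne i j with rfl | hij
    · simp [-quadraticChar_apply, sum_quadraticChar_mul_self]
    · rw [sum_quadraticChar_mul_quadraticChar_sub (ringChar_ne_two_of_card_mod_four hF)
        (sub_ne_zero.mpr hij)]
      simp [hij]
  mul_allOnes := by
    ext i _
    have hsum : ∑ k, quadraticChar F (i - k) = 0 :=
      (Equiv.sum_comp (Equiv.subLeft i) (quadraticChar F)).trans
        (quadraticChar_sum_zero (ringChar_ne_two_of_card_mod_four hF))
    simpa [mul_apply, paleyCore] using hsum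

end Paley

end MaxDet

open MaxDet in
theorem stmt_18_general {q : ℕ} (hq : IsPrimePow q) (hq4 : q % 4 = 3) :
    (∃ M : Matrix (Fin (4 * q + 3)) (Fin (4 * q + 3)) ℤ,
      (∀ i j, M i j = 1 ∨ M i j = -1) ∧
        M.det = 2 ^ (4 * q + 4) * q ^ ((3 * q + 3) / 2) * (q + 4) ^ ((q - 1) / 2)) ∧
    (2 ^ (4 * q + 4) * q ^ ((3 * q + 3) / 2) * (q + 4) ^ ((q - 1) / 2) : ℤ) ≤ md (4 * q + 3) := by
  obtain ⟨hF⟩ := Fintype.nonempty_field_iff (α := Fin q) |>.mpr (by simpa)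
  have hQ : IsSkewCore (paleyCore (Fin q)) := isSkewCore_paleyCore (by simpa)
  obtain ⟨M, hM, hdet⟩ :=
    hQ.exists_isSignMatrix_det_eq (Fintype.card_fin q) (Nat.odd_iff.mpr (by omega))
  exact ⟨⟨M, hM, hdet⟩, hdet ▸ hM.det_le_md⟩

theorem stmt_18 :
    (∃ M : Matrix (Fin 95) (Fin 95) ℤ,
      (∀ i j, M i j = 1 ∨ M i j = -1) ∧ M.det = 2^96 * 23^36 * 27^11) ∧
    (2^96 * 23^36 * 27^11 : ℤ) ≤ md 95 :=
  stmt_18_general (q := 23) (Nat.Prime.isPrimePow (by norm_num)) rfl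
end
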